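/- Let R be a commutative ring, ℓ ≥ 0, and let M be an R-module admitting a projective resolution of length ℓ by finitely generated projective R-modules, such that Ext^i_R(M, R) = 0 for all i ≠ ℓ. Set ω = Ext^ℓ_R(M, R). Then for every R-module N and every n with 0 ≤ n ≤ ℓ there is an isomorphism Tor^R_n(ω, N) ≅ Ext^{ℓ−n}_R(M, N), and Tor^R_n(ω, N) = 0 for n > ℓ. -/

import Mathlib

open CategoryTheory Limits Opposite

namespace Ischebeck
universe v u v' u'
variable {C : Type u} [Category.{v} C] {D : Type u'} [Category.{v'} D] [Abelian C] [Abelian D]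

/-- syzygy sequence -/
noncomputable def syz (F : ChainComplex C ℕ) (n : ℕ) : ShortComplex C :=
  ShortComplex.mk (F.fromOpcycles (n+1) n) (F.pOpcycles n) (by
    rw [← cancel_epi (F.pOpcycles (n+1))]; simp)

lemma syz_shortExact (F : ChainComplex C ℕ) (n : ℕ) (h : F.ExactAt (n+1)) :
    (syz F n).ShortExact where
  mono_f := by
    have := F.homologyIsKernel (n+1) n (by simp)
    dsimp [syz]
    apply Preadditive.mono_of_isZero_kernel' _ this
    exact h.isZero_homology
  epi_g := by dsimp [syz]; infer_instance
  exact := by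
    have h1 := F.opcyclesIsCokernel (n+1) n (by simp)
    apply ShortComplex.exact_of_g_is_cokernel
    refine CokernelCofork.IsColimit.ofπ _ _
      (fun {Z} k hk => F.descOpcycles k (n+1) (by simp) ?_) ?_ ?_
    · have := F.pOpcycles (n+1) ≫= hk
      have h2 := F.p_fromOpcycles (n+1) n =≫ (show F.X n ⟶ Z from k)
      exact h2.symm.trans ((Category.assoc _ _ _).trans (this.trans comp_zero))
    · intro Z k hk
      exact F.p_descOpcycles _ _ _ _
    · intro Z k hk m hm
      apply (cancel_epi (F.pOpcycles n)).1
      exact hm.trans (F.p_descOpcycles _ _ _ _).symm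

noncomputable def mapCokernelIso {ι : Type*} {c : ComplexShape ι}
    (T : C ⥤ D) [T.Additive] [PreservesFiniteColimits T]
    (F : HomologicalComplex C c) (n : ι) :
    ((T.mapHomologicalComplex _).obj F).opcycles n ≅ T.obj (F.opcycles n) :=
  (((T.mapHomologicalComplex _).obj F).opcyclesIsCokernel _ n rfl).coconePointUniqueUpToIso
    (CokernelCofork.mapIsColimit _ (F.opcyclesIsCokernel _ n rfl) T)

lemma p_mapCokernelIso {ι : Type*} {c : ComplexShape ι}
    (T : C ⥤ D) [T.Additive] [PreservesFiniteColimits T]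
    (F : HomologicalComplex C c) (n : ι) :
    ((T.mapHomologicalComplex _).obj F).pOpcycles n ≫ (mapCokernelIso T F n).hom =
      T.map (F.pOpcycles n) :=
  IsColimit.comp_coconePointUniqueUpToIso_hom
    (((T.mapHomologicalComplex _).obj F).opcyclesIsCokernel _ n rfl)
    (CokernelCofork.mapIsColimit _ (F.opcyclesIsCokernel _ n rfl) T) WalkingParallelPair.one

lemma mapCokernelIso_comm (T : C ⥤ D) [T.Additive] [PreservesFiniteColimits T]
    (F : ChainComplex C ℕ) (n : ℕ) :
    ((T.mapHomologicalComplex _).obj F).fromOpcycles (n+1) n =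
      (mapCokernelIso T F (n+1)).hom ≫ T.map (F.fromOpcycles (n+1) n) := by
  apply (cancel_epi (((T.mapHomologicalComplex _).obj F).pOpcycles (n+1))).1
  refine (HomologicalComplex.p_fromOpcycles _ _ _).trans ?_
  refine Eq.trans ?_ (Category.assoc _ _ _)
  refine Eq.trans ?_ (p_mapCokernelIso T F (n+1) =≫ T.map (F.fromOpcycles (n+1) n)).symm
  refine Eq.trans ?_ (T.map_comp _ _)
  exact congrArg T.map (F.p_fromOpcycles (n+1) n).symm

noncomputable def homologySuccIso (T : C ⥤ D) [T.Additive] [PreservesFiniteColimits T]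
    (F : ChainComplex C ℕ) (n : ℕ) :
    ((T.mapHomologicalComplex _).obj F).homology (n+1) ≅ kernel (T.map (syz F n).f) :=
  (((T.mapHomologicalComplex _).obj F).homologyIsKernel (n+1) n (by simp)).conePointUniqueUpToIso
    (limit.isLimit _) ≪≫
  kernel.mapIso (((T.mapHomologicalComplex _).obj F).fromOpcycles (n+1) n)
    (T.map (F.fromOpcycles (n+1) n))
    (mapCokernelIso T F (n+1)) (Iso.refl _)
    ((Category.comp_id _).trans (mapCokernelIso_comm T F n))


section
variable {Φ : C ⥤ CochainComplex D ℕ} [Φ.PreservesZeroMorphisms] {ℓ : ℕ}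
   (hΦ : ∀ S : ShortComplex C, S.ShortExact → (S.map Φ).ShortExact)
   (hv : ∀ (F : C) [Projective F] (j : ℕ), j ≠ ℓ → IsZero ((Φ.obj F).homology j))
include hΦ hv

lemma ker_iso (S : ShortComplex C) (hS : S.ShortExact) (hp : Projective S.X₂) (j : ℕ)
    (hj : j + 1 = ℓ) : Nonempty
      (kernel ((Φ ⋙ HomologicalComplex.homologyFunctor D _ ℓ).map S.f) ≅
        (Φ.obj S.X₃).homology j) := by
  subst hj
  have h := hΦ S hS
  have h1 := h.homology_exact₁ j (j+1) (by simp)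
  have : Mono (h.δ j (j+1) (by simp)) := h.mono_δ _ _ _ (hv S.X₂ j (by simp))
  exact ⟨(limit.isLimit _).conePointUniqueUpToIso h1.fIsKernel⟩

omit hv in
lemma mono_zero (S : ShortComplex C) (hS : S.ShortExact) :
    Mono ((Φ ⋙ HomologicalComplex.homologyFunctor D _ 0).map S.f) := by
  have h := hΦ S hS
  have h0 : Mono (Φ.map S.f) := h.mono_f
  have h1 : Mono (HomologicalComplex.cyclesMap (Φ.map S.f) 0) := inferInstance
  have e2 : HomologicalComplex.homologyMap (Φ.map S.f) 0 =
    (CochainComplex.isoHomologyπ₀ (Φ.obj S.X₁)).inv ≫ HomologicalComplex.cyclesMap (Φ.map S.f) 0 ≫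
     (CochainComplex.isoHomologyπ₀ (Φ.obj S.X₂)).hom := by
    rw [Iso.eq_inv_comp]
    exact HomologicalComplex.homologyπ_naturality (Φ.map S.f) 0
  change Mono (HomologicalComplex.homologyMap (Φ.map S.f) 0)
  rw [e2]
  infer_instance

lemma shift_iso (S : ShortComplex C) (hS : S.ShortExact) (hp : Projective S.X₂) (j : ℕ)
    (hj : j + 1 < ℓ) : Nonempty ((Φ.obj S.X₁).homology (j+1) ≅ (Φ.obj S.X₃).homology j) :=
  ⟨((hΦ S hS).δIso j (j+1) (by simp) (hv S.X₂ _ (by lia)) (hv S.X₂ _ (by lia))).symm⟩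

lemma shift_iter (F : ChainComplex C ℕ) (hF : ∀ n, F.ExactAt (n+1)) (hP : ∀ n, Projective (F.X n))
    (k : ℕ) : ∀ (n j : ℕ), j + k < ℓ → Nonempty
      ((Φ.obj (F.opcycles (n + k))).homology (j + k) ≅ (Φ.obj (F.opcycles n)).homology j) := by
  induction k with
  | zero => intro n j _; exact ⟨Iso.refl _⟩
  | succ k ih =>
    intro n j h
    obtain ⟨e⟩ := ih n j (by lia)
    obtain ⟨e'⟩ := shift_iso hΦ hv (syz F (n+k)) (syz_shortExact F _ (hF _)) (hP _) (j+k) h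
    exact ⟨e' ≪≫ e⟩

theorem mainThm [HasProjectiveResolutions C] (T : C ⥤ D) [T.Additive] [PreservesFiniteColimits T]
   (e : T ≅ Φ ⋙ HomologicalComplex.homologyFunctor D _ ℓ) (N : C) :
   (∀ n ≤ ℓ, Nonempty ((T.leftDerived n).obj N ≅ (Φ.obj N).homology (ℓ - n))) ∧
   (∀ n, ℓ < n → IsZero ((T.leftDerived n).obj N)) := by
  let P := projectiveResolution N
  have hF := P.complex_exactAt_succ
  have hP := P.projective
  have e0 : P.complex.opcycles 0 ≅ N :=
    (P.complex.opcyclesIsCokernel 1 0 (by simp)).coconePointUniqueUpToIso P.isColimitCokernelCofork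
  have key (n : ℕ) : (T.leftDerived (n+1)).obj N ≅
      kernel ((Φ ⋙ HomologicalComplex.homologyFunctor D _ ℓ).map (syz P.complex n).f) :=
    P.isoLeftDerivedObj T (n+1) ≪≫ homologySuccIso T P.complex n ≪≫
      kernel.mapIso _ _ (e.app _) (e.app _) (by simp)
  constructor
  · intro n hn
    cases n with
    | zero => exact ⟨T.leftDerivedZeroIsoSelf.app N ≪≫ e.app N⟩
    | succ n =>
      obtain ⟨e1⟩ := ker_iso hΦ hv (syz P.complex n) (syz_shortExact _ _ (hF _)) (hP _) (ℓ - 1)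
        (by lia)
      obtain ⟨e2⟩ := shift_iter hΦ hv P.complex hF hP n 0 (ℓ - (n+1)) (by lia)
      rw [show ℓ - (n+1) + n = ℓ - 1 by lia, show 0 + n = n by lia] at e2
      exact ⟨key n ≪≫ e1 ≪≫ e2 ≪≫
        (HomologicalComplex.homologyFunctor D _ _).mapIso (Φ.mapIso e0)⟩
  · intro n hn
    obtain ⟨n, rfl⟩ : ∃ m, n = m + 1 := ⟨n - 1, by lia⟩
    refine IsZero.of_iso ?_ (key n)
    rcases Nat.eq_zero_or_pos ℓ with h | h
    · subst h
      have := mono_zero hΦ (syz P.complex n) (syz_shortExact _ _ (hF _))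
      exact isZero_kernel_of_mono _
    · obtain ⟨e1⟩ := ker_iso hΦ hv (syz P.complex n) (syz_shortExact _ _ (hF _)) (hP _) (ℓ - 1)
        (by lia)
      obtain ⟨e2⟩ := shift_iter hΦ hv P.complex hF hP (ℓ - 1) (n - (ℓ - 1)) 0 (by lia)
      rw [show 0 + (ℓ - 1) = ℓ - 1 by lia, show n - (ℓ - 1) + (ℓ - 1) = n by lia] at e2
      refine IsZero.of_iso ?_ (e1 ≪≫ e2)
      obtain ⟨m, hm⟩ : ∃ m, n - (ℓ - 1) = m + 1 := ⟨n - ℓ, by lia⟩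
      rw [hm]
      have := mono_zero hΦ (syz P.complex m) (syz_shortExact _ _ (hF _))
      have : Projective (syz P.complex m).X₂ := hP m
      have hz := hv (syz P.complex m).X₂ 0 (by lia)
      exact @IsZero.of_mono _ _ _ _ _ _ (mono_zero hΦ (syz P.complex m) (syz_shortExact _ _ (hF _))) hz
end

section
open MonoidalCategory
variable {R : Type u} [CommRing R] (K : CochainComplex (ModuleCat.{u} R) ℕ)

noncomputable def tens : ModuleCat.{u} R ⥤ CochainComplex (ModuleCat.{u} R) ℕ where
  obj N := ((tensorRight N).mapHomologicalComplex _).obj K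
  map f := (NatTrans.mapHomologicalComplex ((tensoringRight _).map f) _).app K
  map_id N := by
    ext i : 1
    exact MonoidalCategory.whiskerLeft_id _ _
  map_comp f g := by
    ext i : 1
    exact MonoidalCategory.whiskerLeft_comp _ _ _

instance : (tens K).PreservesZeroMorphisms where
  map_zero X Y := by
    ext i : 1
    exact MonoidalPreadditive.whiskerLeft_zero

lemma tens_shortExact (hK : ∀ i, Module.Flat R (K.X i)) (S : ShortComplex (ModuleCat.{u} R))
    (hS : S.ShortExact) : (S.map (tens K)).ShortExact := by
  apply HomologicalComplex.shortExact_of_degreewise_shortExact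
  intro i
  have := hK i
  exact hS.map_of_exact (tensorLeft (K.X i))

lemma tens_vanish (F : ModuleCat.{u} R) [Projective F] (j : ℕ) (h : IsZero (K.homology j)) :
    IsZero (((tens K).obj F).homology j) := by
  have : Module.Projective R F := (IsProjective.iff_projective F).2 inferInstance
  rw [← HomologicalComplex.exactAt_iff_isZero_homology] at h ⊢
  exact Module.Flat.rTensor_shortComplex_exact F _ h

noncomputable def tensOp (ℓ : ℕ) (N : ModuleCat.{u} R) :
    ((tens K).obj N).opcycles ℓ ≅ K.opcycles ℓ ⊗ N :=
  mapCokernelIso (tensorRight N) K ℓ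

noncomputable def tensIso (ℓ : ℕ) (h : K.d ℓ (ℓ+1) = 0) :
    tensorLeft (K.homology ℓ) ≅ tens K ⋙ HomologicalComplex.homologyFunctor _ _ ℓ :=
  have h' (N : ModuleCat.{u} R) : ((tens K).obj N).d ℓ (ℓ+1) = 0 :=
    (congrArg (tensorRight N).map h).trans ((tensorRight N).map_zero _ _)
  NatIso.ofComponents (fun N =>
    (tensorRight N).mapIso (K.isoHomologyι ℓ (ℓ+1) (by simp) h) ≪≫
    (tensOp K ℓ N).symm ≪≫
     (((tens K).obj N).isoHomologyι ℓ (ℓ+1) (by simp) (h' N)).symm) (by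
    intro N N' f
    have key : (K.opcycles ℓ ◁ f) ≫ (tensOp K ℓ N').inv =
      (tensOp K ℓ N).inv ≫
        HomologicalComplex.opcyclesMap ((tens K).map f) ℓ := by
      rw [Iso.eq_inv_comp]
      refine (Category.assoc _ _ _).symm.trans ?_
      rw [Iso.comp_inv_eq]
      apply (cancel_epi (((tens K).obj N).pOpcycles ℓ)).1
      refine (Category.assoc _ _ _).symm.trans ?_
      refine (p_mapCokernelIso (tensorRight N) K ℓ =≫ (K.opcycles ℓ ◁ f)).trans ?_
      refine Eq.trans ?_ (Category.assoc _ _ _)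
      refine Eq.trans ?_ (HomologicalComplex.p_opcyclesMap ((tens K).map f) ℓ =≫ _).symm
      refine Eq.trans ?_ (Category.assoc _ _ _).symm
      refine Eq.trans ?_ (((tens K).map f).f ℓ ≫= p_mapCokernelIso (tensorRight N') K ℓ).symm
      exact (whisker_exchange (K.pOpcycles ℓ) f).symm
    have key2 : HomologicalComplex.opcyclesMap ((tens K).map f) ℓ ≫
        (((tens K).obj N').isoHomologyι ℓ (ℓ+1) (by simp) (h' N')).inv =
        (((tens K).obj N).isoHomologyι ℓ (ℓ+1) (by simp) (h' N)).inv ≫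
        HomologicalComplex.homologyMap ((tens K).map f) ℓ := by
      rw [Iso.eq_inv_comp, ← Category.assoc, Iso.comp_inv_eq]
      exact (HomologicalComplex.homologyι_naturality ((tens K).map f) ℓ).symm
    have key0 := whisker_exchange (K.isoHomologyι ℓ (ℓ+1) (by simp) h).hom f
    generalize K.isoHomologyι ℓ (ℓ+1) (by simp) h = a at *
    generalize ((tens K).obj N').isoHomologyι ℓ (ℓ+1) (by simp) (h' N') = b' at *
    generalize ((tens K).obj N).isoHomologyι ℓ (ℓ+1) (by simp) (h' N) = b at *
    change (K.homology ℓ ◁ f) ≫ (a.hom ▷ N' ≫ (tensOp K ℓ N').inv ≫ b'.inv) =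
      (a.hom ▷ N ≫ (tensOp K ℓ N).inv ≫ b.inv) ≫
        HomologicalComplex.homologyMap ((tens K).map f) ℓ
    refine (Category.assoc _ _ _).symm.trans ?_
    rw [key0, Category.assoc, Category.assoc]
    congr 1
    refine (Category.assoc _ _ _).symm.trans ?_
    refine (key =≫ b'.inv).trans ?_
    refine (Category.assoc _ _ _).trans ?_
    refine (_ ≫= key2).trans ?_
    exact (Category.assoc _ _ _).symm)
end

section
open MonoidalCategory
variable {R : Type u} [CommRing R]

noncomputable def compIso (P N : ModuleCat.{u} R) [Module.Finite R P] [Projective P] :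
    (ModuleCat.of R (P ⟶ ModuleCat.of R R)) ⊗ N ≅ ModuleCat.of R (P ⟶ N) :=
  have : Module.Projective R P := (IsProjective.iff_projective P).2 inferInstance
  LinearEquiv.toModuleIso
    ((TensorProduct.congr (ModuleCat.homLinearEquiv (S := R) (M := P) (N := ModuleCat.of R R))
       (LinearEquiv.refl R N)).trans
     ((LinearEquiv.ofBijective _ (dualTensorHom_bijective (R := R) (M := P) (N := N))).trans
      (ModuleCat.homLinearEquiv (S := R) (M := P) (N := N)).symm))

lemma flat_hom (P : ModuleCat.{u} R) [Module.Finite R P] [Projective P] :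
    Module.Flat R (P ⟶ ModuleCat.of R R) := by
  have : Module.Projective R P := (IsProjective.iff_projective P).2 inferInstance
  have : Module.Flat R (Module.Dual R P) := inferInstance
  exact Module.Flat.of_linearEquiv
    (ModuleCat.homLinearEquiv (S := R) (M := P) (N := ModuleCat.of R R))

noncomputable def cplxIso (F : ChainComplex (ModuleCat.{u} R) ℕ) (N : ModuleCat.{u} R)
    (h1 : ∀ n, Module.Finite R (F.X n)) (h2 : ∀ n, Projective (F.X n)) :
    (tens (F.linearYonedaObj R (ModuleCat.of R R))).obj N ≅ F.linearYonedaObj R N :=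
  HomologicalComplex.Hom.isoOfComponents (fun i => compIso (F.X i) N) (by
    intro i j _
    apply ModuleCat.hom_ext
    apply TensorProduct.ext'
    intro φ x
    rfl)
end
end Ischebeck

theorem ischebeck_duality (R : Type) [CommRing R] (ℓ : ℕ)
    (M : Type) [AddCommGroup M] [Module R M]
    (P : CategoryTheory.ProjectiveResolution (ModuleCat.of R M))
    (hfg : ∀ n : ℕ, Module.Finite R (P.complex.X n))
    (hlen : ∀ n : ℕ, ℓ < n → IsZero (P.complex.X n))
    (hvanish : ∀ i : ℕ, i ≠ ℓ →
      IsZero (((Ext R (ModuleCat R) i).obj (op (ModuleCat.of R M))).obj (ModuleCat.of R R)))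
    (N : Type) [AddCommGroup N] [Module R N] :
    (∀ n : ℕ, n ≤ ℓ →
      Nonempty
        (((Tor (ModuleCat R) n).obj
            (((Ext R (ModuleCat R) ℓ).obj (op (ModuleCat.of R M))).obj
              (ModuleCat.of R R))).obj (ModuleCat.of R N) ≅
          ((Ext R (ModuleCat R) (ℓ - n)).obj (op (ModuleCat.of R M))).obj
            (ModuleCat.of R N))) ∧
    (∀ n : ℕ, ℓ < n →
      IsZero (((Tor (ModuleCat R) n).obj
          (((Ext R (ModuleCat R) ℓ).obj (op (ModuleCat.of R M))).obj
            (ModuleCat.of R R))).obj (ModuleCat.of R N))) := by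
  let K := P.complex.linearYonedaObj R (ModuleCat.of R R)
  have hK : ∀ i, Module.Flat R (K.X i) := fun i => by
    have := hfg i
    exact Ischebeck.flat_hom (P.complex.X i)
  have hv : ∀ (F : ModuleCat.{0} R) [Projective F] (j : ℕ), j ≠ ℓ →
      IsZero (((Ischebeck.tens K).obj F).homology j) := fun F _ j hj =>
    Ischebeck.tens_vanish K F j (IsZero.of_iso (hvanish j hj) (P.isoExt j _).symm)
  have hd : K.d ℓ (ℓ+1) = 0 := by
    apply IsZero.eq_of_tgt
    have : Subsingleton (K.X (ℓ+1)) :=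
      ⟨fun a b => (hlen (ℓ+1) (by lia)).eq_of_src (show P.complex.X (ℓ+1) ⟶ _ from a) b⟩
    exact ModuleCat.isZero_of_subsingleton _
  have e := Ischebeck.tensIso K ℓ hd
  have w : ((Ext R (ModuleCat R) ℓ).obj (op (ModuleCat.of R M))).obj (ModuleCat.of R R) ≅
    K.homology ℓ := P.isoExt ℓ _
  have m := Ischebeck.mainThm (Ischebeck.tens_shortExact K hK) hv
    (MonoidalCategory.tensorLeft (K.homology ℓ)) e (ModuleCat.of R N)
  have t (n : ℕ) := ((Tor (ModuleCat.{0} R) n).mapIso w).app (ModuleCat.of R N)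
  constructor
  · intro n hn
    obtain ⟨e1⟩ := m.1 n hn
    exact ⟨t n ≪≫ e1 ≪≫ (HomologicalComplex.homologyFunctor _ _ (ℓ - n)).mapIso
      (Ischebeck.cplxIso P.complex (ModuleCat.of R N) hfg P.projective) ≪≫ (P.isoExt _ _).symm⟩
  · intro n hn
    exact IsZero.of_iso (m.2 n hn) (t n)
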